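/- Let (R, Ad_Γ) be a graded von Neumann algebra containing an odd unitary U (i.e., U ∈ R^(1) unitary). If E ∈ R^(0) is a projection that is finite relative to the von Neumann algebra R^(0), then E is finite relative to R. -/

import Mathlib

noncomputable section

variable {H : Type*} [NormedAddCommGroup H] [InnerProductSpace ℂ H] [CompleteSpace H]

/-- A self-adjoint unitary operator. -/
def IsSAU (Γ : H →L[ℂ] H) : Prop := star Γ = Γ ∧ Γ * Γ = 1

/-- The even part of a graded set of operators. -/
def evenPart (R : Set (H →L[ℂ] H)) (Γ : H →L[ℂ] H) : Set (H →L[ℂ] H) :=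
  {x | x ∈ R ∧ Γ * x * Γ = x}

/-- The odd part of a graded set of operators. -/
def oddPart (R : Set (H →L[ℂ] H)) (Γ : H →L[ℂ] H) : Set (H →L[ℂ] H) :=
  {x | x ∈ R ∧ Γ * x * Γ = -x}

/-- The center of a set of operators. -/
def centerSet (R : Set (H →L[ℂ] H)) : Set (H →L[ℂ] H) :=
  {x | x ∈ R ∧ ∀ y ∈ R, x * y = y * x}

/-- An (orthogonal) projection operator. -/
def IsProjOp (e : H →L[ℂ] H) : Prop := e * e = e ∧ star e = e

/-- `e` is a subprojection of `f`. -/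
def SubProj (e f : H →L[ℂ] H) : Prop := e * f = e ∧ f * e = e

/-- Murray–von Neumann equivalence of projections relative to `M`. -/
def MvNEquiv (M : Set (H →L[ℂ] H)) (e f : H →L[ℂ] H) : Prop :=
  ∃ v ∈ M, star v * v = e ∧ v * star v = f

/-- `e` is finite relative to `M`. -/
def FiniteProj (M : Set (H →L[ℂ] H)) (e : H →L[ℂ] H) : Prop :=
  ∀ f ∈ M, IsProjOp f → SubProj f e → MvNEquiv M f e → f = e

/-- `e` is an abelian projection relative to `M`: the corner `eMe` is commutative. -/
def AbelianProj (M : Set (H →L[ℂ] H)) (e : H →L[ℂ] H) : Prop :=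
  ∀ x ∈ M, ∀ y ∈ M, (e * x * e) * (e * y * e) = (e * y * e) * (e * x * e)

/-- A von Neumann algebra (given as a set) is of type III: no nonzero finite projections. -/
def TypeIII (M : Set (H →L[ℂ] H)) : Prop :=
  ∀ e ∈ M, IsProjOp e → FiniteProj M e → e = 0

/-- Type II₁ : finite with no nonzero abelian projections. -/
def TypeII1 (M : Set (H →L[ℂ] H)) : Prop :=
  FiniteProj M 1 ∧ ∀ e ∈ M, IsProjOp e → AbelianProj M e → e = 0

/-- Type I_n : the identity is the sum of `n` orthogonal, mutually equivalent
abelian projections. -/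
def TypeI (M : Set (H →L[ℂ] H)) (n : Cardinal) : Prop :=
  ∃ (ι : Type) (E : ι → H →L[ℂ] H), Cardinal.mk ι = n ∧
    (∀ a, E a ∈ M ∧ IsProjOp (E a) ∧ AbelianProj M (E a)) ∧
    (Pairwise fun a b => E a * E b = 0) ∧
    (∀ a b, MvNEquiv M (E a) (E b)) ∧
    (∀ v : H, HasSum (fun a => (E a) v) v)

/-- The scalar operators. -/
def scalarOps (H : Type*) [NormedAddCommGroup H] [InnerProductSpace ℂ H] [CompleteSpace H] :
    Set (H →L[ℂ] H) := Set.range fun c : ℂ => c • (1 : H →L[ℂ] H)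

/-- `M` is a factor. -/
def IsFactor (M : Set (H →L[ℂ] H)) : Prop := centerSet M = scalarOps H

/-- `R` is graded by the self-adjoint unitary `Γ`. -/
def GradedBy (R : Set (H →L[ℂ] H)) (Γ : H →L[ℂ] H) : Prop :=
  IsSAU Γ ∧ ∀ x ∈ R, Γ * x * Γ ∈ R

/-- The von Neumann algebra generated by a (star-closed, unital) set:
its double commutant. -/
def genVN (S : Set (H →L[ℂ] H)) : Set (H →L[ℂ] H) :=
  Set.centralizer (Set.centralizer S)

/-- `c` is the central support of `T` in `M`. -/
def IsCentralSupport (M : Set (H →L[ℂ] H)) (T c : H →L[ℂ] H) : Prop :=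
  c ∈ centerSet M ∧ IsProjOp c ∧ c * T = T ∧
    ∀ d ∈ centerSet M, IsProjOp d → d * T = T → c * d = c

section Operators

variable {K : Type*} [NormedAddCommGroup K] [InnerProductSpace ℂ K] [CompleteSpace K]

/-- An operator vanishing on a set and on its orthogonal complement is zero. -/
theorem eq_zero_of_vanishing {L : Type*} [NormedAddCommGroup L] [NormedSpace ℂ L]
    {Y : Set K} (T : K →L[ℂ] L) (hY : ∀ y ∈ Y, T y = 0)
    (hperp : ∀ z, (∀ y ∈ Y, inner ℂ y z = 0) → T z = 0) : T = 0 := by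
  have hle : (Submodule.span ℂ Y).topologicalClosure ≤ T.ker :=
    Submodule.topologicalClosure_minimal _ (Submodule.span_le.2 hY) T.isClosed_ker
  ext z
  have : CompleteSpace (Submodule.span ℂ Y).topologicalClosure :=
    (Submodule.isClosed_topologicalClosure _).completeSpace_coe
  obtain ⟨x, hx, w, hw, rfl⟩ :=
    (Submodule.span ℂ Y).topologicalClosure.exists_add_mem_mem_orthogonal z
  have h1 : T x = 0 := hle hx
  have h2 : T w = 0 := hperp w fun y hy =>
    (Submodule.mem_orthogonal _ _).1 hw y
      (Submodule.le_topologicalClosure _ (Submodule.subset_span hy))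
  simp [h1, h2]

theorem smul_adjoint_apply_of_norm_sq {L : Type*} [NormedAddCommGroup L] [InnerProductSpace ℂ L]
    [CompleteSpace L] (c : L →L[ℂ] K) (hc : ∀ w, ‖w‖ ^ 2 = 2 * ‖c w‖ ^ 2) (w : L) :
    (2 : ℂ) • ContinuousLinearMap.adjoint c (c w) = w := by
  have : ((2 : ℂ) • (ContinuousLinearMap.adjoint c ∘L c) : L →L[ℂ] L).toLinearMap
      = LinearMap.id := by
    rw [← ext_inner_map]
    intro x
    change inner ℂ ((2 : ℂ) • ContinuousLinearMap.adjoint c (c x)) x = inner ℂ x x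
    rw [inner_smul_left, ContinuousLinearMap.adjoint_inner_left, inner_self_eq_norm_sq_to_K,
      inner_self_eq_norm_sq_to_K, map_ofNat]
    simpa using (congrArg (fun r : ℝ => (r : ℂ)) (hc x)).symm
  exact congrArg (fun f => f w) this

/-- The graph of an isometric intertwiner between subspaces extends by zero to a partial
isometry in the commutant. -/
theorem exists_partialIsometry_of_graph (S : Set (K →L[ℂ] K))
    (W : Submodule ℂ (WithLp 2 (K × K))) (hW : ∀ p ∈ W, ‖p.fst‖ = ‖p.snd‖)
    (hS : ∀ s ∈ S, ∀ p ∈ W, WithLp.toLp 2 (s p.fst, s p.snd) ∈ W ∧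
      WithLp.toLp 2 (star s p.fst, star s p.snd) ∈ W) :
    ∃ u ∈ StarSubalgebra.centralizer ℂ S,
      (∀ p ∈ W, u p.fst = p.snd ∧ star u p.snd = p.fst) ∧
      (∀ z, (∀ p ∈ W, inner ℂ p.fst z = 0) → u z = 0) ∧
      (∀ z, (∀ p ∈ W, inner ℂ p.snd z = 0) → star u z = 0) := by
  set C := W.topologicalClosure with hC
  have hCW : ∀ p ∈ C, ‖p.fst‖ = ‖p.snd‖ := by
    intro p hp
    have hcl : IsClosed {p : WithLp 2 (K × K) | ‖p.fst‖ = ‖p.snd‖} :=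
      isClosed_eq ((WithLp.fstL 2 ℂ K K).continuous.norm) ((WithLp.sndL 2 ℂ K K).continuous.norm)
    exact closure_minimal (fun q hq => hW q hq) hcl hp
  have : CompleteSpace C := (Submodule.isClosed_topologicalClosure _).completeSpace_coe
  let a : C →L[ℂ] K := WithLp.fstL 2 ℂ K K ∘L C.subtypeL
  let b : C →L[ℂ] K := WithLp.sndL 2 ℂ K K ∘L C.subtypeL
  have hnorm : ∀ w : C, ‖w‖ ^ 2 = 2 * ‖a w‖ ^ 2 ∧ ‖w‖ ^ 2 = 2 * ‖b w‖ ^ 2 := by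
    intro w
    have h1 : ‖w‖ ^ 2 = ‖a w‖ ^ 2 + ‖b w‖ ^ 2 :=
      WithLp.prod_norm_sq_eq_of_L2 (w : WithLp 2 (K × K))
    have h2 : ‖a w‖ = ‖b w‖ := hCW w w.2
    rw [h1, h2]; constructor <;> ring
  have ha := smul_adjoint_apply_of_norm_sq a fun w => (hnorm w).1
  have hb := smul_adjoint_apply_of_norm_sq b fun w => (hnorm w).2
  let u : K →L[ℂ] K := (2 : ℂ) • (b ∘L ContinuousLinearMap.adjoint a)
  have hustar : star u = (2 : ℂ) • (a ∘L ContinuousLinearMap.adjoint b) := by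
    simp [u, ContinuousLinearMap.star_eq_adjoint, ContinuousLinearMap.adjoint_comp]
  have hu : ∀ w, u (a w) = b w := fun w => by
    rw [← congrArg b (ha w)]; simp [u]
  have hus : ∀ w, star u (b w) = a w := fun w => by
    rw [← congrArg a (hb w), hustar]; simp
  have hz : ∀ c : C →L[ℂ] K, ∀ z, (∀ p : C, (p : WithLp 2 (K × K)) ∈ W → inner ℂ (c p) z = 0) →
      ContinuousLinearMap.adjoint c z = 0 := by
    intro c z h
    refine ext_inner_left ℂ fun w => ?_
    rw [ContinuousLinearMap.adjoint_inner_right, inner_zero_right]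
    have hcl : IsClosed {w : C | inner ℂ (c w) z = 0} :=
      isClosed_eq (by fun_prop) continuous_const
    have hd : Dense {w : C | (w : WithLp 2 (K × K)) ∈ W} := by
      intro x
      rw [closure_subtype]
      have : (Subtype.val '' {w : C | (w : WithLp 2 (K × K)) ∈ W}) = (W : Set _) := by
        ext y
        constructor
        · rintro ⟨q, hq, rfl⟩; exact hq
        · intro hy; exact ⟨⟨y, W.le_topologicalClosure hy⟩, hy, rfl⟩
      rw [this]
      exact x.2
    exact (hcl.closure_subset_iff.2 fun w hw => h w hw) (hd w)
  have huz : ∀ z, (∀ p ∈ W, inner ℂ p.fst z = 0) → u z = 0 := by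
    intro z h
    have := hz a z fun p hp => h p hp
    simp [u, this]
  have husz : ∀ z, (∀ p ∈ W, inner ℂ p.snd z = 0) → star u z = 0 := by
    intro z h
    have := hz b z fun p hp => h p hp
    simp [hustar, this]
  have huW : ∀ p ∈ W, u p.fst = p.snd ∧ star u p.snd = p.fst := fun p hp =>
    ⟨hu ⟨p, W.le_topologicalClosure hp⟩, hus ⟨p, W.le_topologicalClosure hp⟩⟩
  have comm : ∀ s : K →L[ℂ] K, (∀ p ∈ W, WithLp.toLp 2 (s p.fst, s p.snd) ∈ W) →
      (∀ p ∈ W, WithLp.toLp 2 (star s p.fst, star s p.snd) ∈ W) → s * u = u * s := by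
    intro s h1 h2
    rw [← sub_eq_zero]
    refine eq_zero_of_vanishing (Y := {y | ∃ p ∈ W, p.fst = y}) _ ?_ ?_
    · rintro _ ⟨p, hp, rfl⟩
      have := (huW _ (h1 p hp)).1
      simp only [WithLp.toLp_fst, WithLp.toLp_snd] at this
      simp [(huW p hp).1, this]
    · intro z hz
      have e1 : u z = 0 := huz z fun p hp => hz _ ⟨p, hp, rfl⟩
      have e2 : u (s z) = 0 := huz _ fun p hp => by
        rw [← ContinuousLinearMap.adjoint_inner_left, ← ContinuousLinearMap.star_eq_adjoint]
        exact hz _ ⟨_, h2 p hp, rfl⟩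
      simp [e1, e2]
  refine ⟨u, ?_, huW, huz, husz⟩
  rw [StarSubalgebra.mem_centralizer_iff]
  intro s hs
  refine ⟨comm s (fun p hp => (hS s hs p hp).1) (fun p hp => (hS s hs p hp).2),
    comm (star s) (fun p hp => (hS s hs p hp).2) (fun p hp => ?_)⟩
  rw [star_star]; exact (hS s hs p hp).1

theorem StarSubalgebra.apply_comm {S : Set (K →L[ℂ] K)} {n s : K →L[ℂ] K}
    (hn : n ∈ StarSubalgebra.centralizer ℂ S) (hs : s ∈ S) (x : K) :
    s (n x) = n (s x) ∧ star s (n x) = n (star s x) := by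
  have := StarSubalgebra.mem_centralizer_iff ℂ |>.1 hn s hs
  exact ⟨congrArg (fun f => f x) this.1, congrArg (fun f => f x) this.2⟩

/-- The orthogonal projection onto the closed span of a set invariant under `S` and its adjoints
belongs to the commutant of `S`. -/
theorem exists_isProjOp_of_invariant (S : Set (K →L[ℂ] K)) (Y : Set K)
    (hS : ∀ s ∈ S, ∀ y ∈ Y, s y ∈ Y ∧ star s y ∈ Y) :
    ∃ e ∈ StarSubalgebra.centralizer ℂ S, IsProjOp e ∧ (∀ y ∈ Y, e y = y) ∧
      (∀ z, (∀ y ∈ Y, inner ℂ y z = 0) → e z = 0) ∧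
      (∀ T : K →L[ℂ] K, (∀ y ∈ Y, T y = 0) → T * e = 0) := by
  let d : K →ₗ[ℂ] WithLp 2 (K × K) :=
    (WithLp.linearEquiv 2 ℂ (K × K)).symm.toLinearMap ∘ₗ LinearMap.prod LinearMap.id LinearMap.id
  have hspan : ∀ T : K →L[ℂ] K, (∀ y ∈ Y, T y ∈ Y) →
      ∀ x ∈ Submodule.span ℂ Y, T x ∈ Submodule.span ℂ Y := by
    intro T hT x hx
    have : Submodule.span ℂ Y ≤ (Submodule.span ℂ Y).comap T.toLinearMap :=
      Submodule.span_le.2 fun y hy => Submodule.subset_span (hT y hy)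
    exact this hx
  obtain ⟨e, he, h1, h2, h3⟩ := exists_partialIsometry_of_graph S
    ((Submodule.span ℂ Y).map d) (by rintro _ ⟨x, _, rfl⟩; rfl) (by
      rintro s hs _ ⟨x, hx, rfl⟩
      exact ⟨⟨s x, hspan s (fun y hy => (hS s hs y hy).1) x hx, rfl⟩,
        ⟨star s x, hspan (star s) (fun y hy => (hS s hs y hy).2) x hx, rfl⟩⟩)
  have horth : ∀ z, (∀ y ∈ Y, inner ℂ y z = 0) → ∀ x ∈ Submodule.span ℂ Y, inner ℂ x z = 0 := by
    intro z hz x hx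
    induction hx using Submodule.span_induction with
    | mem y hy => exact hz y hy
    | zero => simp
    | add x y _ _ hx hy => simp [hx, hy]
    | smul c x _ hx => simp [hx]
  have k1 : ∀ y ∈ Y, e y = y := fun y hy => (h1 _ ⟨y, Submodule.subset_span hy, rfl⟩).1
  have k1' : ∀ y ∈ Y, star e y = y := fun y hy => (h1 _ ⟨y, Submodule.subset_span hy, rfl⟩).2
  have k2 : ∀ z, (∀ y ∈ Y, inner ℂ y z = 0) → e z = 0 := fun z hz =>
    h2 z (by rintro _ ⟨x, hx, rfl⟩; exact horth z hz x hx)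
  have k2' : ∀ z, (∀ y ∈ Y, inner ℂ y z = 0) → star e z = 0 := fun z hz =>
    h3 z (by rintro _ ⟨x, hx, rfl⟩; exact horth z hz x hx)
  refine ⟨e, he, ⟨?_, ?_⟩, k1, k2, fun T hT => ?_⟩
  · rw [← sub_eq_zero]
    exact eq_zero_of_vanishing (Y := Y) _ (fun y hy => by simp [k1 y hy])
      (fun z hz => by simp [k2 z hz])
  · rw [← sub_eq_zero]
    exact eq_zero_of_vanishing (Y := Y) _ (fun y hy => by simp [k1 y hy, k1' y hy])
      (fun z hz => by simp [k2 z hz, k2' z hz])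
  · exact eq_zero_of_vanishing (Y := Y) _ (fun y hy => by simp [k1 y hy, hT y hy])
      (fun z hz => by simp [k2 z hz])

/-- Polar decomposition inside a commutant. -/
theorem exists_polar (S : Set (K →L[ℂ] K)) {T : K →L[ℂ] K}
    (hT : T ∈ StarSubalgebra.centralizer ℂ S) :
    ∃ u ∈ StarSubalgebra.centralizer ℂ S, u * star u * u = u ∧ T * (star u * u) = T ∧
      (∀ X : K →L[ℂ] K, T * X = 0 → u * X = 0) ∧
      (∀ X : K →L[ℂ] K, star T * X = 0 → star u * X = 0) := by
  set P := CFC.abs T with hP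
  have hPP : P * P = star T * T := CFC.abs_mul_abs T
  have hPs : star P = P := (CFC.abs_nonneg T).isSelfAdjoint
  have hPnorm : ∀ x, ‖P x‖ = ‖T x‖ := by
    intro x
    have h : inner ℂ (P x) (P x) = inner ℂ (T x) (T x) := by
      have := congrArg (fun f : K →L[ℂ] K => inner ℂ (f x) x) hPP
      simp only [mul_apply_eq_comp] at this
      nth_rw 1 [← hPs] at this
      simpa [ContinuousLinearMap.star_eq_adjoint, ContinuousLinearMap.adjoint_inner_left]
        using this
    have h' := inner_self_eq_norm_sq_to_K (𝕜 := ℂ) (P x)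
    rw [h, inner_self_eq_norm_sq_to_K] at h'
    have : ‖T x‖ ^ 2 = ‖P x‖ ^ 2 := by exact_mod_cast h'
    exact ((sq_eq_sq₀ (norm_nonneg _) (norm_nonneg _)).1 this).symm
  have hPN : ∀ s ∈ S, Commute P s ∧ Commute P (star s) := by
    intro s hs
    have := StarSubalgebra.mem_centralizer_iff ℂ |>.1 hT s hs
    have h1 : Commute T s := this.1.symm
    have h2 : Commute T (star s) := this.2.symm
    exact ⟨h1.cfcAbs_left h2, h2.cfcAbs_left (by simpa using h1)⟩
  let d : K →ₗ[ℂ] WithLp 2 (K × K) :=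
    (WithLp.linearEquiv 2 ℂ (K × K)).symm.toLinearMap ∘ₗ
      LinearMap.prod P.toLinearMap T.toLinearMap
  have hd : ∀ x, d x = WithLp.toLp 2 (P x, T x) := fun x => rfl
  obtain ⟨u, hu, h1, h2, h3⟩ := exists_partialIsometry_of_graph S (LinearMap.range d)
    (by rintro _ ⟨x, rfl⟩; exact hPnorm x) (by
      rintro s hs _ ⟨x, rfl⟩
      have e := StarSubalgebra.apply_comm hT hs x
      have f1 := congrArg (fun f => f x) (hPN s hs).1
      have f2 := congrArg (fun f => f x) (hPN s hs).2
      simp only [mul_apply_eq_comp] at f1 f2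
      exact ⟨⟨s x, by simp [hd, e.1, f1]⟩, ⟨star s x, by simp [hd, e.2, f2]⟩⟩)
  have huP : u * P = T := by ext x; exact (h1 _ ⟨x, rfl⟩).1
  have huT : star u * T = P := by ext x; exact (h1 _ ⟨x, rfl⟩).2
  have hPT : ∀ x, T x = 0 ↔ P x = 0 := fun x => by
    rw [← norm_eq_zero, ← hPnorm, norm_eq_zero]
  have huz : ∀ X : K →L[ℂ] K, T * X = 0 → u * X = 0 := by
    intro X hX
    ext z
    refine h2 _ ?_
    rintro _ ⟨x, rfl⟩
    have : P (X z) = 0 := (hPT _).1 (congrArg (fun f => f z) hX)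
    change inner ℂ (P x) (X z) = 0
    rw [← hPs, ContinuousLinearMap.star_eq_adjoint, ContinuousLinearMap.adjoint_inner_left, this,
      inner_zero_right]
  have husz : ∀ X : K →L[ℂ] K, star T * X = 0 → star u * X = 0 := by
    intro X hX
    ext z
    refine h3 _ ?_
    rintro _ ⟨x, rfl⟩
    have : star T (X z) = 0 := congrArg (fun f => f z) hX
    change inner ℂ (T x) (X z) = 0
    rw [← ContinuousLinearMap.adjoint_inner_right, ← ContinuousLinearMap.star_eq_adjoint, this,
      inner_zero_right]
  have hTu : T * (star u * u) = T := by
    have h : P * (star u * u) = P := by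
      have : star T * u = P := by rw [← star_star u, ← star_mul, huT, hPs]
      calc P * (star u * u) = star (u * P) * u := by rw [star_mul, hPs, mul_assoc]
        _ = P := by rw [huP, this]
    calc T * (star u * u) = u * (P * (star u * u)) := by rw [← mul_assoc u, huP]
      _ = T := by rw [h, huP]
  refine ⟨u, hu, ?_, hTu, huz, husz⟩
  have := huz (1 - star u * u) (by rw [mul_sub, mul_one, hTu, sub_self])
  rw [mul_sub, mul_one, sub_eq_zero] at this
  rw [mul_assoc]; exact this.symm

/-- For projections `G`, `E` with meet `A`, the projection `G - A` is equivalent to a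
subprojection of `1 - E` orthogonal to everything in the meet of `1 - G` and `1 - E`. -/
theorem exists_partialIsometry_sub_meet (S : Set (K →L[ℂ] K)) {G E A : K →L[ℂ] K}
    (hG : G ∈ StarSubalgebra.centralizer ℂ S) (hE : E ∈ StarSubalgebra.centralizer ℂ S)
    (hGp : IsProjOp G) (hEp : IsProjOp E) (hAp : IsProjOp A) (hGA : G * A = A) (hEA : E * A = A)
    (hmax : ∀ x, G x = x → E x = x → A x = x) :
    ∃ u ∈ StarSubalgebra.centralizer ℂ S, star u * u = G - A ∧ (1 - E) * u = u ∧
      ∀ B : K →L[ℂ] K, E * B = 0 → G * B = 0 → star u * B = 0 := by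
  obtain ⟨hGG, hGs⟩ := hGp
  obtain ⟨hEE, hEs⟩ := hEp
  obtain ⟨hAA, hAs⟩ := hAp
  have hAG : A * G = A := by simpa [hGs, hAs] using congrArg star hGA
  have hT : (1 - E) * G ∈ StarSubalgebra.centralizer ℂ S := mul_mem (sub_mem (one_mem _) hE) hG
  have hTs : star ((1 - E) * G) = G * (1 - E) := by simp [hGs, hEs]
  obtain ⟨u, hu, -, hTq, hker, hker'⟩ := exists_polar S hT
  rw [hTs] at hker'
  have huA : u * A = 0 := hker A (by rw [mul_assoc, hGA, sub_mul, one_mul, hEA, sub_self])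
  have huG : u * G = u := by
    have := hker (1 - G) (by rw [mul_assoc, mul_sub, mul_one, hGG, sub_self, mul_zero])
    rw [mul_sub, mul_one, sub_eq_zero] at this
    exact this.symm
  have hqs : star (star u * u) = star u * u := by simp
  set q := star u * u with hq
  have hqGA : q * (G - A) = q := by rw [hq, mul_assoc, mul_sub, huG, huA, sub_zero]
  have hGAq : (G - A) * q = q := by
    have := congrArg star hqGA
    rwa [star_mul, star_sub, hGs, hAs, hqs] at this
  refine ⟨u, hu, ?_, ?_, fun B hEB hGB => hker' B ?_⟩
  · have key : (G - A) * (1 - q) = 0 := by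
      ext z
      set y := ((G - A) * (1 - q)) z with hy
      have e1 : G * ((G - A) * (1 - q)) = (G - A) * (1 - q) := by
        rw [← mul_assoc, mul_sub G, hGG, hGA]
      have e2 : A * ((G - A) * (1 - q)) = 0 := by
        rw [← mul_assoc, mul_sub A, hAG, hAA, sub_self, zero_mul]
      have e3 : (1 - E) * ((G - A) * (1 - q)) = 0 := by
        have c : (G - A) * (1 - q) = (1 - q) * (G - A) := by
          rw [mul_sub (G - A), sub_mul 1, hqGA, hGAq, mul_one, one_mul]
        rw [← e1, ← mul_assoc, c, ← mul_assoc, mul_sub _ 1, mul_one, hTq, sub_self,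
          zero_mul]
      have f1 : G y = y := congrArg (fun f => f z) e1
      have f2 : A y = 0 := congrArg (fun f => f z) e2
      have f3 : y - E y = 0 := congrArg (fun f => f z) e3
      exact (hmax y f1 (sub_eq_zero.1 f3).symm).symm.trans f2
    rw [mul_sub, mul_one, hGAq, sub_eq_zero] at key
    exact key.symm
  · have := hker' E (by rw [mul_assoc, sub_mul, one_mul, hEE, sub_self, mul_zero])
    have := congrArg star this
    rw [star_mul, hEs, star_star, star_zero] at this
    rw [sub_mul, one_mul, this, sub_zero]
  · rw [mul_assoc, sub_mul, one_mul, hEB, sub_zero, hGB]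

/-- The meet of two projections in a commutant. -/
theorem exists_meet (S : Set (K →L[ℂ] K)) {G E : K →L[ℂ] K}
    (hG : G ∈ StarSubalgebra.centralizer ℂ S) (hE : E ∈ StarSubalgebra.centralizer ℂ S) :
    ∃ A ∈ StarSubalgebra.centralizer ℂ S, IsProjOp A ∧ G * A = A ∧ E * A = A ∧
      ∀ x, G x = x → E x = x → A x = x := by
  obtain ⟨A, hA, hAp, h1, -, h3⟩ := exists_isProjOp_of_invariant S {x | G x = x ∧ E x = x} (by
    rintro s hs y ⟨hy1, hy2⟩
    have a := StarSubalgebra.apply_comm hG hs y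
    have b := StarSubalgebra.apply_comm hE hs y
    rw [hy1] at a
    rw [hy2] at b
    exact ⟨⟨a.1.symm, b.1.symm⟩, ⟨a.2.symm, b.2.symm⟩⟩)
  refine ⟨A, hA, hAp, ?_, ?_, fun x hx hx' => h1 x ⟨hx, hx'⟩⟩
  · have := h3 (G - 1) (fun y hy => by simp [hy.1])
    rwa [sub_mul, one_mul, sub_eq_zero] at this
  · have := h3 (E - 1) (fun y hy => by simp [hy.2])
    rwa [sub_mul, one_mul, sub_eq_zero] at this

/-- Generalized comparison of two projections in a commutant. -/
theorem exists_comparison (S : Set (K →L[ℂ] K)) {A B : K →L[ℂ] K}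
    (hA : A ∈ StarSubalgebra.centralizer ℂ S) (hB : B ∈ StarSubalgebra.centralizer ℂ S)
    (hAp : IsProjOp A) (hBp : IsProjOp B) :
    ∃ v ∈ StarSubalgebra.centralizer ℂ S, ∃ c ∈ StarSubalgebra.centralizer ℂ S, IsProjOp c ∧
      (∀ n ∈ StarSubalgebra.centralizer ℂ S, c * n = n * c) ∧ v * A = v ∧ B * v = v ∧
      c * (star v * v) = c * A ∧ (1 - c) * (v * star v) = (1 - c) * B := by
  obtain ⟨hAA, hAs⟩ := hAp
  obtain ⟨hBB, hBs⟩ := hBp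
  let good : Set (Submodule ℂ (WithLp 2 (K × K))) := {W |
    (∀ p ∈ W, ‖p.fst‖ = ‖p.snd‖ ∧ A p.fst = p.fst ∧ B p.snd = p.snd) ∧
    ∀ s ∈ S, ∀ p ∈ W, WithLp.toLp 2 (s p.fst, s p.snd) ∈ W ∧
      WithLp.toLp 2 (star s p.fst, star s p.snd) ∈ W}
  obtain ⟨W, hWmax⟩ : ∃ W, Maximal (· ∈ good) W := by
    refine zorn_le₀ good fun c hc hchain => ?_
    rcases c.eq_empty_or_nonempty with rfl | hne
    · refine ⟨⊥, ⟨?_, ?_⟩, by simp⟩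
      · rintro p hp
        rw [Submodule.mem_bot] at hp
        simp [hp]
      · rintro s - p hp
        rw [Submodule.mem_bot] at hp
        subst hp
        simp
    · have hmem : ∀ p, p ∈ sSup c ↔ ∃ V ∈ c, p ∈ V := fun p =>
        Submodule.mem_sSup_of_directed hne hchain.directedOn
      refine ⟨sSup c, ⟨?_, ?_⟩, fun V hV => le_sSup hV⟩
      · intro p hp
        obtain ⟨V, hV, hpV⟩ := (hmem p).1 hp
        exact (hc hV).1 p hpV
      · intro s hs p hp
        obtain ⟨V, hV, hpV⟩ := (hmem p).1 hp
        have := (hc hV).2 s hs p hpV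
        exact ⟨(hmem _).2 ⟨V, hV, this.1⟩, (hmem _).2 ⟨V, hV, this.2⟩⟩
  obtain ⟨⟨hW, hWS⟩, hmax⟩ := hWmax
  obtain ⟨v, hv, hvW, hvz, hvz'⟩ :=
    exists_partialIsometry_of_graph S W (fun p hp => (hW p hp).1) hWS
  have hsymm : ∀ (T : K →L[ℂ] K), star T = T → ∀ x y, inner ℂ (T x) y = inner ℂ x (T y) := by
    intro T hT x y
    conv_lhs => rw [← hT]
    rw [ContinuousLinearMap.star_eq_adjoint, ContinuousLinearMap.adjoint_inner_left]
  have hvA : v * A = v := by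
    have : v * (1 - A) = 0 := by
      ext z
      refine hvz _ fun p hp => ?_
      rw [← (hW p hp).2.1, hsymm A hAs]
      have : A ((1 - A) z) = 0 := by
        have : A * (1 - A) = 0 := by rw [mul_sub, mul_one, hAA, sub_self]
        exact congrArg (fun f => f z) this
      exact (congrArg (inner ℂ _) this).trans (inner_zero_right _)
    rw [mul_sub, mul_one, sub_eq_zero] at this
    exact this.symm
  have hvB : star v * B = star v := by
    have : star v * (1 - B) = 0 := by
      ext z
      refine hvz' _ fun p hp => ?_
      rw [← (hW p hp).2.2, hsymm B hBs]
      have : B ((1 - B) z) = 0 := by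
        have : B * (1 - B) = 0 := by rw [mul_sub, mul_one, hBB, sub_self]
        exact congrArg (fun f => f z) this
      exact (congrArg (inner ℂ _) this).trans (inner_zero_right _)
    rw [mul_sub, mul_one, sub_eq_zero] at this
    exact this.symm
  have hBv : B * v = v := by simpa [hBs] using congrArg star hvB
  set A₀ := A - star v * v with hA₀
  set B₀ := B - v * star v with hB₀
  have hA₀N : A₀ ∈ StarSubalgebra.centralizer ℂ S := sub_mem hA (mul_mem (star_mem hv) hv)
  have hB₀N : B₀ ∈ StarSubalgebra.centralizer ℂ S := sub_mem hB (mul_mem hv (star_mem hv))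
  have hA₀s : star A₀ = A₀ := by simp [hA₀, hAs]
  have hB₀s : star B₀ = B₀ := by simp [hB₀, hBs]
  have hA₀W : ∀ p ∈ W, A₀ p.fst = 0 := fun p hp => by
    simp [hA₀, (hW p hp).2.1, (hvW p hp).1, (hvW p hp).2]
  have hB₀W : ∀ p ∈ W, B₀ p.snd = 0 := fun p hp => by
    simp [hB₀, (hW p hp).2.2, (hvW p hp).1, (hvW p hp).2]
  have hA₀A : A₀ * A = A₀ := by rw [hA₀, sub_mul, hAA, mul_assoc, hvA]
  have hB₀B : B₀ * B = B₀ := by rw [hB₀, sub_mul, hBB, mul_assoc, hvB]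
  have hzero : ∀ n ∈ StarSubalgebra.centralizer ℂ S, B₀ * n * A₀ = 0 := by
    intro n hn
    have hTN := mul_mem (mul_mem hB₀N hn) hA₀N
    have hTs : star (B₀ * n * A₀) = A₀ * (star n * B₀) := by simp [hA₀s, hB₀s]
    obtain ⟨u, hu, huuu, hTu, hk, hk'⟩ := exists_polar S hTN
    rw [hTs] at hk'
    have hkv : ∀ x, A₀ x = 0 → u x = 0 := by
      intro x hx
      have h := hk ((innerSL ℂ x).smulRight x) (by ext z; simp [hx])
      have h := congrArg (fun f => f x) h
      by_cases hx0 : x = 0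
      · simp [hx0]
      · simpa [hx0] using h
    have hkv' : ∀ x, B₀ x = 0 → star u x = 0 := by
      intro x hx
      have h := hk' ((innerSL ℂ x).smulRight x) (by ext z; simp [hx])
      have h := congrArg (fun f => f x) h
      by_cases hx0 : x = 0
      · simp [hx0]
      · simpa [hx0] using h
    have huA : u * A = u := by
      have := hk (1 - A) (by rw [mul_assoc, mul_sub, mul_one, hA₀A, sub_self, mul_zero])
      rw [mul_sub, mul_one, sub_eq_zero] at this
      exact this.symm
    have huB : star u * B = star u := by
      have := hk' (1 - B) (by
        rw [mul_assoc, mul_assoc, mul_sub, mul_one, hB₀B, sub_self, mul_zero, mul_zero])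
      rw [mul_sub, mul_one, sub_eq_zero] at this
      exact this.symm
    have hAu : A * (star u * u) = star u * u := by
      have := congrArg star huA
      rw [star_mul, hAs] at this
      rw [← mul_assoc, this]
    have hBu : B * u = u := by simpa [hBs] using congrArg star huB
    have husu : ∀ x, u (star u (u x)) = u x := fun x => congrArg (fun f => f x) huuu
    let d : K →ₗ[ℂ] WithLp 2 (K × K) :=
      (WithLp.linearEquiv 2 ℂ (K × K)).symm.toLinearMap ∘ₗ
        LinearMap.prod (star u * u).toLinearMap u.toLinearMap
    have hd : ∀ x, d x = WithLp.toLp 2 (star u (u x), u x) := fun x => rfl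
    have hgood : W ⊔ LinearMap.range d ∈ good := by
      constructor
      · intro r hr
        obtain ⟨p, hp, q, ⟨x, rfl⟩, rfl⟩ := Submodule.mem_sup.1 hr
        obtain ⟨w1, w2, w3⟩ := hW p hp
        rw [hd]
        simp only [WithLp.add_fst, WithLp.add_snd, WithLp.toLp_fst, WithLp.toLp_snd, map_add]
        have o1 : inner ℂ p.fst (star u (u x)) = 0 := by
          rw [ContinuousLinearMap.star_eq_adjoint, ContinuousLinearMap.adjoint_inner_right,
            hkv _ (hA₀W p hp), inner_zero_left]
        have o2 : inner ℂ p.snd (u x) = 0 := by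
          rw [← ContinuousLinearMap.adjoint_inner_left, ← ContinuousLinearMap.star_eq_adjoint,
            hkv' _ (hB₀W p hp), inner_zero_left]
        have n1 : ‖star u (u x)‖ * ‖star u (u x)‖ = ‖u x‖ * ‖u x‖ := by
          have h : inner ℂ (star u (u x)) (star u (u x)) = inner ℂ (u x) (u x) := by
            nth_rw 2 [ContinuousLinearMap.star_eq_adjoint]
            rw [ContinuousLinearMap.adjoint_inner_right, husu]
          rw [inner_self_eq_norm_mul_norm (𝕜 := ℂ) (star u (u x)) |>.symm,
            inner_self_eq_norm_mul_norm (𝕜 := ℂ) (u x) |>.symm, h]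
        refine ⟨?_, ?_, ?_⟩
        · rw [← mul_self_inj (norm_nonneg _) (norm_nonneg _),
            norm_add_sq_eq_norm_sq_add_norm_sq_of_inner_eq_zero _ _ o1,
            norm_add_sq_eq_norm_sq_add_norm_sq_of_inner_eq_zero _ _ o2, n1, w1]
        · rw [w2]
          exact congrArg (p.fst + ·) (congrArg (fun f => f x) hAu)
        · rw [w3]
          exact congrArg (p.snd + ·) (congrArg (fun f => f x) hBu)
      · intro s hs r hr
        obtain ⟨p, hp, q, ⟨x, rfl⟩, rfl⟩ := Submodule.mem_sup.1 hr
        have a := fun x => StarSubalgebra.apply_comm hu hs x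
        have b := fun x => StarSubalgebra.apply_comm (star_mem hu) hs x
        refine ⟨Submodule.mem_sup.2 ⟨_, (hWS s hs p hp).1, d (s x), ⟨_, rfl⟩, ?_⟩,
          Submodule.mem_sup.2 ⟨_, (hWS s hs p hp).2, d (star s x), ⟨_, rfl⟩, ?_⟩⟩
        · rw [hd, hd, ← WithLp.toLp_add]
          simp [a, b]
        · rw [hd, hd, ← WithLp.toLp_add]
          simp [a, b]
    have hle : LinearMap.range d ≤ W := le_sup_right.trans (hmax hgood le_sup_left)
    have hu0 : u = 0 := by
      ext x
      have := hkv _ (hA₀W _ (hle ⟨x, rfl⟩))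
      rw [hd] at this
      simpa [husu] using this
    rw [← hTu, hu0]
    simp
  obtain ⟨c, hc, hcp, h1, h2, -⟩ := exists_isProjOp_of_invariant
    (S ∪ (StarSubalgebra.centralizer ℂ S : Set (K →L[ℂ] K)))
    {y | ∃ n ∈ StarSubalgebra.centralizer ℂ S, ∃ x, n (B₀ x) = y} (by
      rintro s (hs | hs) _ ⟨n, hn, x, rfl⟩
      · have a := fun x => StarSubalgebra.apply_comm hn hs x
        have b := fun x => StarSubalgebra.apply_comm hB₀N hs x
        exact ⟨⟨n, hn, s x, by rw [(a _).1, (b _).1]⟩, ⟨n, hn, star s x, by rw [(a _).2, (b _).2]⟩⟩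
      · exact ⟨⟨s * n, mul_mem hs hn, x, rfl⟩, ⟨star s * n, mul_mem (star_mem hs) hn, x, rfl⟩⟩)
  have hc' := StarSubalgebra.mem_centralizer_iff ℂ |>.1 hc
  have hcA : c * A₀ = 0 := by
    ext z
    refine h2 _ ?_
    rintro _ ⟨n, hn, x, rfl⟩
    rw [← ContinuousLinearMap.adjoint_inner_right, ← ContinuousLinearMap.star_eq_adjoint,
      hsymm B₀ hB₀s]
    have : B₀ (star n (A₀ z)) = 0 := congrArg (fun f => f z) (hzero _ (star_mem hn))
    exact (congrArg (inner ℂ _) this).trans (inner_zero_right _)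
  have hcB : c * B₀ = B₀ := by
    ext z
    exact h1 _ ⟨1, one_mem _, z, rfl⟩
  refine ⟨v, hv, c, StarSubalgebra.mem_centralizer_iff ℂ |>.2 fun s hs => hc' s (Or.inl hs),
    hcp, fun n hn => (hc' n (Or.inr hn)).1.symm, hvA, hBv, ?_, ?_⟩
  · rw [hA₀, mul_sub, sub_eq_zero] at hcA
    exact hcA.symm
  · have : (1 - c) * B₀ = 0 := by rw [sub_mul, one_mul, hcB, sub_self]
    rw [hB₀, mul_sub, sub_eq_zero] at this
    exact this.symm

theorem mul_mul_of_mul_eq {R : Type*} [Semigroup R] {a b c : R} (h : a * b = c) (x : R) :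
    a * (b * x) = c * x := by
  rw [← mul_assoc, h]

/-- If `G` is equivalent to a subprojection of a finite projection `F`, every isometry of the
corner of `G` is unitary. -/
theorem FiniteProj.mul_star_eq {N : StarSubalgebra ℂ (K →L[ℂ] K)} {F G w T : K →L[ℂ] K}
    (hfin : FiniteProj (N : Set (K →L[ℂ] K)) F) (hFN : F ∈ N) (hF : IsProjOp F)
    (hw : w ∈ N) (hT : T ∈ N) (hww : star w * w = G) (hwG : w * G = w) (hFw : F * w = w)
    (hTT : star T * T = G) (hGT : G * T = T) (hTG : T * G = T) : T * star T = G := by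
  obtain ⟨hFF, hFs⟩ := hF
  have hGs : star G = G := by rw [← hww]; simp
  have hGG : G * G = G := by nth_rw 1 [← hww]; rw [mul_assoc, hwG, hww]
  have hwF : star w * F = star w := by simpa [hFs] using congrArg star hFw
  have hGw : G * star w = star w := by simpa [hGs] using congrArg star hwG
  have hTsG : star T * G = star T := by simpa [hGs] using congrArg star hGT
  have hGTs : G * star T = star T := by simpa [hGs] using congrArg star hTG
  have hy1 : star (w * T * star w + (F - w * star w)) *
      (w * T * star w + (F - w * star w)) = F := by
    simp only [star_add, star_sub, star_mul, star_star, hFs, mul_add, add_mul, mul_sub, sub_mul,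
      mul_assoc, hFF, hwF, hGw, mul_mul_of_mul_eq hww, mul_mul_of_mul_eq hFw,
      mul_mul_of_mul_eq hTT, mul_mul_of_mul_eq hGT]
    abel
  have hy2 : (w * T * star w + (F - w * star w)) * star (w * T * star w + (F - w * star w))
      = w * (T * star T) * star w + (F - w * star w) := by
    simp only [star_add, star_sub, star_mul, star_star, hFs, mul_add, add_mul, mul_sub, sub_mul,
      mul_assoc, hFF, hwF, hGw, mul_mul_of_mul_eq hww, mul_mul_of_mul_eq hFw,
      mul_mul_of_mul_eq hGTs]
    abel
  have hyN : w * T * star w + (F - w * star w) ∈ N :=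
    add_mem (mul_mem (mul_mem hw hT) (star_mem hw)) (sub_mem hFN (mul_mem hw (star_mem hw)))
  have hFy : F * (w * T * star w + (F - w * star w)) = w * T * star w + (F - w * star w) := by
    simp only [mul_add, mul_sub, mul_assoc, hFF, mul_mul_of_mul_eq hFw]
  set y := w * T * star w + (F - w * star w) with hy
  have hyF : star y * F = star y := by simpa [hFs] using congrArg star hFy
  have hyFr : y * F = y := by
    rw [hy]
    simp only [add_mul, sub_mul, mul_assoc, hFF, hwF]
  have hFys : F * star y = star y := by simpa [hFs] using congrArg star hyFr
  have key := hfin (y * star y) (mul_mem hyN (star_mem hyN))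
    ⟨by rw [mul_assoc, ← mul_assoc (star y), hy1, hFys], by simp⟩
    ⟨by rw [mul_assoc, hyF], by rw [← mul_assoc, hFy]⟩
    ⟨star y, star_mem hyN, by rw [star_star], by rw [star_star, hy1]⟩
  rw [hy2] at key
  have key2 : w * (T * star T) * star w = w * star w := by
    have : w * (T * star T) * star w = (w * (T * star T) * star w + (F - w * star w)) - F
        + w * star w := by abel
    rw [this, key, sub_self, zero_add]
  have key3 : star w * (w * (T * star T) * star w) * w = star w * (w * star w) * w := by rw [key2]
  simpa only [mul_assoc, hww, mul_mul_of_mul_eq hww, hGG, hTsG, mul_mul_of_mul_eq hGT] using key3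

/-- An isometry in a commutant generates a projection that splits the space into two parts, each
carrying a copy of the shift. -/
theorem exists_shift_splitting (S : Set (K →L[ℂ] K)) {V : K →L[ℂ] K}
    (hV : V ∈ StarSubalgebra.centralizer ℂ S) (hVV : star V * V = 1) :
    ∃ G ∈ StarSubalgebra.centralizer ℂ S, IsProjOp G ∧ G * (1 - V * star V) = 1 - V * star V ∧
      G * (V * V * G) = V * V * G ∧ G * (V * G) = 0 := by
  set D := 1 - V * star V with hD
  have hDs : star D = D := by simp [hD]
  have hDV : D * V = 0 := by rw [hD, sub_mul, one_mul, mul_assoc, hVV, mul_one, sub_self]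
  have hDN : D ∈ StarSubalgebra.centralizer ℂ S :=
    sub_mem (one_mem _) (mul_mem hV (star_mem hV))
  have hpow : ∀ k, star (V ^ k) * V ^ k = 1 := by
    intro k
    induction k with
    | zero => simp
    | succ k ih => rw [pow_succ, star_mul, mul_assoc, ← mul_assoc (star (V ^ k)), ih, one_mul, hVV]
  have hDVD : ∀ k, D * V ^ (k + 1) = 0 := fun k => by
    rw [pow_succ', ← mul_assoc, hDV, zero_mul]
  have horth : ∀ j k, j ≠ k → star (V ^ j * D) * (V ^ k * D) = 0 := by
    intro j k hjk
    wlog h : j < k generalizing j k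
    · have := this k j hjk.symm (by omega)
      simpa using congrArg star this
    obtain ⟨m, rfl⟩ := Nat.exists_eq_add_of_lt h
    rw [star_mul, hDs, add_assoc, pow_add, mul_assoc, ← mul_assoc (star (V ^ j)),
      ← mul_assoc (star (V ^ j)), hpow, one_mul, ← mul_assoc, hDVD, zero_mul]
  obtain ⟨G, hG, hGp, h1, h2, h3⟩ := exists_isProjOp_of_invariant S
    {y | ∃ k x, (V ^ (2 * k) * D) x = y} (by
      rintro s hs _ ⟨k, x, rfl⟩
      have := StarSubalgebra.apply_comm (mul_mem (pow_mem hV (2 * k)) hDN) hs x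
      exact ⟨⟨k, s x, this.1.symm⟩, ⟨k, star s x, this.2.symm⟩⟩)
  refine ⟨G, hG, hGp, ?_, ?_, ?_⟩
  · ext x
    exact h1 _ ⟨0, x, by simp⟩
  · have := h3 (G * (V * V) - V * V) (by
      rintro _ ⟨k, x, rfl⟩
      have e : V * V * (V ^ (2 * k) * D) = V ^ (2 * (k + 1)) * D := by
        rw [← mul_assoc, ← pow_two, ← pow_add, mul_add, mul_one, add_comm]
      have e' : (V * V) ((V ^ (2 * k) * D) x) = (V ^ (2 * (k + 1)) * D) x :=
        congrArg (fun f => f x) e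
      have e'' : G ((V * V) ((V ^ (2 * k) * D) x)) = (V * V) ((V ^ (2 * k) * D) x) := by
        rw [e']; exact h1 _ ⟨_, _, rfl⟩
      exact sub_eq_zero.2 e'')
    rw [sub_mul, sub_eq_zero] at this
    rw [← mul_assoc, this]
  · rw [← mul_assoc]
    refine h3 _ ?_
    rintro _ ⟨k, x, rfl⟩
    refine h2 _ ?_
    rintro _ ⟨j, z, rfl⟩
    have e : V * (V ^ (2 * k) * D) = V ^ (2 * k + 1) * D := by
      rw [← mul_assoc, ← pow_succ']
    have e' : V ((V ^ (2 * k) * D) x) = (V ^ (2 * k + 1) * D) x := congrArg (fun f => f x) e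
    have e'' : star (V ^ (2 * j) * D) ((V ^ (2 * k + 1) * D) x) = 0 :=
      congrArg (fun f => f x) (horth (2 * j) (2 * k + 1) (by omega))
    change inner ℂ ((V ^ (2 * j) * D) z) (V ((V ^ (2 * k) * D) x)) = 0
    rw [e', ← ContinuousLinearMap.adjoint_inner_right, ← ContinuousLinearMap.star_eq_adjoint, e'',
      inner_zero_right]

theorem mul_eq_of_star_mul_self_eq {w G : K →L[ℂ] K} (hG : IsProjOp G) (h : star w * w = G) :
    w * G = w := by
  rw [← sub_eq_zero, ← CStarRing.star_mul_self_eq_zero_iff, star_sub, star_mul, hG.2, sub_mul,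
    mul_sub, mul_sub, h, mul_assoc, mul_assoc, mul_mul_of_mul_eq h, h, hG.1, hG.1, sub_self]

/-- A version of `FiniteProj.mul_star_eq` on a central summand. -/
theorem FiniteProj.central_mul_star_eq {N : StarSubalgebra ℂ (K →L[ℂ] K)}
    {F G w T c : K →L[ℂ] K} (hfin : FiniteProj (N : Set (K →L[ℂ] K)) F) (hFN : F ∈ N)
    (hF : IsProjOp F) (hcN : c ∈ N) (hcp : IsProjOp c) (hcomm : ∀ n ∈ N, c * n = n * c)
    (hG : G ∈ N) (hGp : IsProjOp G) (hw : w ∈ N) (hT : T ∈ N) (hww : c * (star w * w) = c * G)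
    (hFw : F * w = w) (hTT : star T * T = G) (hGT : G * T = T) (hTG : T * G = T) :
    c * (T * star T) = c * G := by
  obtain ⟨hcc, hcs⟩ := hcp
  have hmul : ∀ a ∈ N, ∀ b, c * a * (c * b) = c * (a * b) := fun a ha b => by
    rw [hcomm a ha, mul_assoc, mul_mul_of_mul_eq hcc, ← mul_assoc, ← hcomm a ha, mul_assoc]
  have hstar : ∀ a ∈ N, star (c * a) = c * star a := fun a ha => by
    rw [star_mul, hcs, hcomm _ (star_mem ha)]
  have hcG : IsProjOp (c * G) := ⟨by rw [hmul G hG, hGp.1], by rw [hstar G hG, hGp.2]⟩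
  have hww' : star (c * w) * (c * w) = c * G := by rw [hstar w hw, hmul _ (star_mem hw), hww]
  have key := hfin.mul_star_eq hFN hF (mul_mem hcN hw) (mul_mem hcN hT) hww'
    (mul_eq_of_star_mul_self_eq hcG hww') (by rw [hcomm w hw, ← mul_assoc, hFw])
    (by rw [hstar T hT, hmul _ (star_mem hT), hTT]) (by rw [hmul G hG, hGT])
    (by rw [hmul T hT, hTG])
  rwa [hstar T hT, hmul T hT] at key

theorem cube_shift_identities {V G : K →L[ℂ] K} (hVV : star V * V = 1) (hGp : IsProjOp G)
    (hGVV : G * (V * V * G) = V * V * G) (hGVG : G * (V * G) = 0) :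
    let T := V * V * V * G * star V + (1 - G - V * G * star V)
    star T * T = 1 - G ∧ (1 - G) * T = T ∧ T * (1 - G) = T ∧
      T * star T = 1 - G + V * (V * V * G * star (V * V * G)) * star V - V * G * star V := by
  obtain ⟨hGG, hGs⟩ := hGp
  intro T
  have hGVV : G * (V * (V * G)) = V * (V * G) := by simpa only [mul_assoc] using hGVV
  have hGVVx : ∀ x, G * (V * (V * (G * x))) = V * (V * (G * x)) := fun x => by
    simpa only [mul_assoc] using congrArg (· * x) hGVV
  have hGVV' : G * (star V * (star V * G)) = G * (star V * star V) := by
    simpa [hGs, mul_assoc] using congrArg star hGVV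
  have hGVVx' : ∀ x, G * (star V * (star V * (G * x))) = G * (star V * (star V * x)) := fun x => by
    simpa only [mul_assoc] using congrArg (· * x) hGVV'
  have hGVGx : ∀ x, G * (V * (G * x)) = 0 := fun x => by
    simpa only [mul_assoc, zero_mul] using congrArg (· * x) hGVG
  have hGVG' : G * (star V * G) = 0 := by
    simpa [hGs, mul_assoc] using congrArg star hGVG
  have hXx : ∀ x, G * (V * (V * (V * (G * x)))) = 0 := fun x => by
    rw [← hGVVx, hGVGx]
  have hX' : G * (star V * (star V * (star V * G))) = 0 := by
    simpa [hGs, mul_assoc] using congrArg star (hXx 1)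
  have hVVx := mul_mul_of_mul_eq hVV
  have hGGx := mul_mul_of_mul_eq hGG
  refine ⟨?_, ?_, ?_, ?_⟩ <;>
  simp only [T, star_add, star_sub, star_mul, star_star, star_one, hGs, mul_add, add_mul, mul_sub,
    sub_mul, mul_assoc, hVVx, hGGx, hGG, one_mul, mul_one, hGVVx, hGVVx', hGVGx, hGVG',
    hXx, hX', mul_zero] <;> abel

/-- If the identity is the sum of two finite projections of a commutant, then it is finite. -/
theorem mul_star_eq_one_of_finiteProj (S : Set (K →L[ℂ] K)) {E V : K →L[ℂ] K}
    (hE : E ∈ StarSubalgebra.centralizer ℂ S) (hEp : IsProjOp E)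
    (hfin : FiniteProj (StarSubalgebra.centralizer ℂ S : Set (K →L[ℂ] K)) E)
    (hfin' : FiniteProj (StarSubalgebra.centralizer ℂ S : Set (K →L[ℂ] K)) (1 - E))
    (hV : V ∈ StarSubalgebra.centralizer ℂ S) (hVV : star V * V = 1) : V * star V = 1 := by
  have hone : (1 : K →L[ℂ] K) ∈ StarSubalgebra.centralizer ℂ S := one_mem _
  have hcompl : ∀ {P : K →L[ℂ] K}, IsProjOp P → IsProjOp (1 - P) := fun h =>
    ⟨by rw [mul_sub, mul_one, sub_mul, one_mul, h.1, sub_self, sub_zero], by simp [h.2]⟩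
  obtain ⟨G, hG, hGp, hGD, hGVV, hGVG⟩ := exists_shift_splitting S hV hVV
  obtain ⟨A, hA, hAp, hGA, hEA, hAmax⟩ := exists_meet S hG hE
  obtain ⟨B, hB, hBp, hGB, hEB, hBmax⟩ := exists_meet S (sub_mem hone hG) (sub_mem hone hE)
  obtain ⟨u, hu, huu, hEu, huB⟩ :=
    exists_partialIsometry_sub_meet S hG hE hGp hEp hAp hGA hEA hAmax
  obtain ⟨t, ht, htt, hEt, htA⟩ := exists_partialIsometry_sub_meet S (sub_mem hone hG)
    (sub_mem hone hE) (hcompl hGp) (hcompl hEp) hBp hGB hEB hBmax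
  obtain ⟨v, hv, c, hc, hcp, hcomm, hvA, hBv, hcA, hcB⟩ := exists_comparison S hA hB hAp hBp
  have hGB0 : G * B = 0 := by simpa [sub_mul] using hGB
  have hEB0 : E * B = 0 := by simpa [sub_mul] using hEB
  have hub : star u * B = 0 := huB B hEB0 hGB0
  have hta : star t * A = 0 := htA A (by rw [sub_mul, one_mul, hEA, sub_self])
    (by rw [sub_mul, one_mul, hGA, sub_self])
  rw [sub_sub_cancel] at hEt
  have hAv : A * star v = star v := by simpa [hAp.2] using congrArg star hvA
  have huv : star u * v = 0 := by rw [← hBv, ← mul_assoc, hub, zero_mul]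
  have hvu : star v * u = 0 := by simpa using congrArg star huv
  have htv : star t * star v = 0 := by rw [← hAv, ← mul_assoc, hta, zero_mul]
  have hvt : v * t = 0 := by simpa using congrArg star htv
  have hGs : star G = G := hGp.2
  have hGG : G * G = G := hGp.1
  have h₁ : c * (V * V * G * star (V * V * G)) = c * G := by
    refine hfin'.central_mul_star_eq (w := u + v) (sub_mem hone hE) (hcompl hEp) hc hcp hcomm hG
      hGp (add_mem hu hv) (mul_mem (mul_mem hV hV) hG) ?_ ?_ ?_ hGVV (by rw [mul_assoc, hGG])
    · rw [star_add, add_mul, mul_add (star u), mul_add (star v), huu, huv, hvu, add_zero, zero_add,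
        mul_add, hcA, mul_sub, sub_add_cancel]
    · rw [mul_add, hEu, sub_mul 1 E v, ← hBv, mul_mul_of_mul_eq hEB0, zero_mul, one_mul, sub_zero]
    · simp only [star_mul, mul_assoc, mul_mul_of_mul_eq hVV, one_mul, hGs, hGG]
  obtain ⟨hTT, hGT, hTG, hTT'⟩ := cube_shift_identities hVV hGp hGVV hGVG
  set T := V * V * V * G * star V + (1 - G - V * G * star V)
  have h₂ : (1 - c) * (T * star T) = (1 - c) * (1 - G) := by
    refine hfin.central_mul_star_eq (w := t + star v) hE hEp (sub_mem hone hc) (hcompl hcp) ?_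
      (sub_mem hone hG) (hcompl hGp) (add_mem ht (star_mem hv)) ?_ ?_ ?_ hTT hGT hTG
    · intro n hn
      rw [sub_mul, mul_sub, hcomm n hn, one_mul, mul_one]
    · exact add_mem (mul_mem (mul_mem (mul_mem (mul_mem hV hV) hV) hG) (star_mem hV))
        (sub_mem (sub_mem hone hG) (mul_mem (mul_mem hV hG) (star_mem hV)))
    · rw [star_add, star_star, add_mul, mul_add (star t), mul_add v, htt, htv, hvt, add_zero,
        zero_add, mul_add, hcB, mul_sub _ (1 - G), sub_add_cancel]
    · rw [mul_add, hEt, ← hAv, mul_mul_of_mul_eq hEA]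
  have h₃ : (1 - c) * (V * V * G * star (V * V * G)) = (1 - c) * G := by
    have hconj : ∀ M, star V * ((1 - c) * (V * M * star V)) * V = (1 - c) * M := fun M => by
      have hcV : star V * (1 - c) = (1 - c) * star V := by
        rw [sub_mul, mul_sub, hcomm _ (star_mem hV), one_mul, mul_one]
      rw [mul_mul_of_mul_eq hcV]
      simp only [mul_assoc, hVV, mul_mul_of_mul_eq hVV, one_mul, mul_one]
    rw [hTT', add_sub_assoc, mul_add, add_eq_left, mul_sub, sub_eq_zero] at h₂
    rw [← hconj, h₂, hconj]
  have h₄ : V * V * G * star (V * V * G) = G := by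
    rwa [sub_mul, sub_mul, h₁, sub_left_inj, one_mul, one_mul] at h₃
  have h₅ : V * V * G * star (V * V * G) * (1 - V * star V) = 0 := by
    simp only [star_mul, mul_assoc, mul_sub, mul_one, mul_mul_of_mul_eq hVV, one_mul, sub_self]
  rw [h₄, hGD, sub_eq_zero] at h₅
  exact h₅.symm

open ContinuousLinearMap (adjoint)

/-- `w₁` and `w₂` identify the range of the projection `E` with two complementary subspaces
of `K`. -/
structure IsDoubling (E : H →L[ℂ] H) (w₁ w₂ : H →L[ℂ] K) : Prop where
  adjoint_fst_comp_fst : adjoint w₁ ∘L w₁ = E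
  adjoint_snd_comp_snd : adjoint w₂ ∘L w₂ = E
  adjoint_fst_comp_snd : adjoint w₁ ∘L w₂ = 0
  adjoint_snd_comp_fst : adjoint w₂ ∘L w₁ = 0
  fst_comp : w₁ ∘L E = w₁
  snd_comp : w₂ ∘L E = w₂
  comp_adjoint_fst : E ∘L adjoint w₁ = adjoint w₁
  comp_adjoint_snd : E ∘L adjoint w₂ = adjoint w₂
  add_eq_one : w₁ ∘L adjoint w₁ + w₂ ∘L adjoint w₂ = 1

/-- The operator on `K` with the given matrix of operators on the range of a doubled
projection. -/
def block (w₁ w₂ : H →L[ℂ] K) (x y z t : H →L[ℂ] H) : K →L[ℂ] K :=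
  w₁ ∘L x ∘L adjoint w₁ + w₁ ∘L y ∘L adjoint w₂ + w₂ ∘L z ∘L adjoint w₁ + w₂ ∘L t ∘L adjoint w₂

theorem star_block (w₁ w₂ : H →L[ℂ] K) (x y z t : H →L[ℂ] H) :
    star (block w₁ w₂ x y z t) = block w₁ w₂ (star x) (star z) (star y) (star t) := by
  simp only [block, ContinuousLinearMap.star_eq_adjoint, map_add, ContinuousLinearMap.adjoint_comp,
    ContinuousLinearMap.adjoint_adjoint, ContinuousLinearMap.comp_assoc]
  abel

theorem comp_comp_of_comp_eq {A B C D : Type*} [NormedAddCommGroup A] [NormedSpace ℂ A]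
    [NormedAddCommGroup B] [NormedSpace ℂ B] [NormedAddCommGroup C] [NormedSpace ℂ C]
    [NormedAddCommGroup D] [NormedSpace ℂ D] {f : C →L[ℂ] D} {g : B →L[ℂ] C} {h : B →L[ℂ] D}
    (e : f ∘L g = h) (x : A →L[ℂ] B) : f ∘L g ∘L x = h ∘L x := by
  rw [← ContinuousLinearMap.comp_assoc, e]

namespace IsDoubling

variable {E : H →L[ℂ] H} {w₁ w₂ : H →L[ℂ] K}

theorem block_mul (h : IsDoubling E w₁ w₂) {x y z t x' y' z' t' : H →L[ℂ] H}
    (hx : E * x' = x') (hy : E * y' = y') (hz : E * z' = z') (ht : E * t' = t') :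
    block w₁ w₂ x y z t * block w₁ w₂ x' y' z' t' = block w₁ w₂ (x * x' + y * z')
      (x * y' + y * t') (z * x' + t * z') (z * y' + t * t') := by
  rw [ContinuousLinearMap.mul_def] at hx hy hz ht
  simp only [block, ContinuousLinearMap.mul_def, ContinuousLinearMap.comp_add,
    ContinuousLinearMap.add_comp, ContinuousLinearMap.comp_assoc,
    comp_comp_of_comp_eq h.adjoint_fst_comp_fst, comp_comp_of_comp_eq h.adjoint_snd_comp_snd,
    comp_comp_of_comp_eq h.adjoint_fst_comp_snd, comp_comp_of_comp_eq h.adjoint_snd_comp_fst,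
    comp_comp_of_comp_eq hx, comp_comp_of_comp_eq hy, comp_comp_of_comp_eq hz,
    comp_comp_of_comp_eq ht, ContinuousLinearMap.zero_comp, ContinuousLinearMap.comp_zero]
  abel

theorem block_comp_fst (h : IsDoubling E w₁ w₂) {x y z t : H →L[ℂ] H}
    (hx : x * E = x) (hz : z * E = z) :
    block w₁ w₂ x y z t ∘L w₁ = w₁ ∘L x + w₂ ∘L z := by
  rw [ContinuousLinearMap.mul_def] at hx hz
  simp only [block, ContinuousLinearMap.add_comp, ContinuousLinearMap.comp_assoc,
    h.adjoint_fst_comp_fst, h.adjoint_snd_comp_fst, hx, hz, ContinuousLinearMap.comp_zero, add_zero]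

theorem block_comp_snd (h : IsDoubling E w₁ w₂) {x y z t : H →L[ℂ] H}
    (hy : y * E = y) (ht : t * E = t) :
    block w₁ w₂ x y z t ∘L w₂ = w₁ ∘L y + w₂ ∘L t := by
  rw [ContinuousLinearMap.mul_def] at hy ht
  simp only [block, ContinuousLinearMap.add_comp, ContinuousLinearMap.comp_assoc,
    h.adjoint_snd_comp_snd, h.adjoint_fst_comp_snd, hy, ht, ContinuousLinearMap.comp_zero, add_zero,
    zero_add]

theorem block_one (h : IsDoubling E w₁ w₂) : block w₁ w₂ E 0 0 E = 1 := by
  simp only [block, h.comp_adjoint_fst, h.comp_adjoint_snd, ContinuousLinearMap.zero_comp,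
    ContinuousLinearMap.comp_zero, add_zero, h.add_eq_one]

theorem block_fst (h : IsDoubling E w₁ w₂) : block w₁ w₂ E 0 0 0 = w₁ ∘L adjoint w₁ := by
  simp only [block, h.comp_adjoint_fst, ContinuousLinearMap.zero_comp,
    ContinuousLinearMap.comp_zero, add_zero]

theorem eq_of_block_eq (h : IsDoubling E w₁ w₂) {x y z t x' y' z' t' : H →L[ℂ] H}
    (hx : E * x * E = x) (hx' : E * x' * E = x') (hy : E * y * E = y) (hy' : E * y' * E = y')
    (e : block w₁ w₂ x y z t = block w₁ w₂ x' y' z' t') : x = x' ∧ y = y' := by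
  have key : ∀ x y z t : H →L[ℂ] H, E * x * E = x → E * y * E = y →
      adjoint w₁ ∘L block w₁ w₂ x y z t ∘L w₁ = x ∧
      adjoint w₁ ∘L block w₁ w₂ x y z t ∘L w₂ = y := by
    intro x y z t hx hy
    simp only [ContinuousLinearMap.mul_def, ContinuousLinearMap.comp_assoc] at hx hy
    constructor <;>
    simp only [block, ContinuousLinearMap.comp_add,
      ContinuousLinearMap.add_comp, ContinuousLinearMap.comp_assoc,
      h.adjoint_fst_comp_fst, h.adjoint_snd_comp_snd, h.adjoint_fst_comp_snd,
      h.adjoint_snd_comp_fst,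
      comp_comp_of_comp_eq h.adjoint_fst_comp_fst,
      comp_comp_of_comp_eq h.adjoint_fst_comp_snd,
      hx, hy, ContinuousLinearMap.zero_comp, ContinuousLinearMap.comp_zero, add_zero, zero_add]
  have k := key x y z t hx hy
  have k' := key x' y' z' t' hx' hy'
  exact ⟨by rw [← k.1, e, k'.1], by rw [← k.2, e, k'.2]⟩

end IsDoubling

theorem exists_isDoubling {E : H →L[ℂ] H} (hE : IsProjOp E) (X : Submodule ℂ H) [CompleteSpace X]
    (hmem : ∀ x : X, E x = x) (hEX : ∀ x, E x ∈ X) :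
    ∃ w₁ w₂ : H →L[ℂ] WithLp 2 (X × X), IsDoubling E w₁ w₂ := by
  obtain ⟨hEE, hEs⟩ := hE
  have hi : ∀ x, adjoint X.subtypeL x = ⟨E x, hEX x⟩ := fun x => by
    refine ext_inner_left ℂ fun y => ?_
    rw [ContinuousLinearMap.adjoint_inner_right]
    change inner ℂ (y : H) x = inner ℂ (y : H) (E x)
    nth_rw 1 [← hmem y, ← hEs]
    rw [ContinuousLinearMap.star_eq_adjoint, ContinuousLinearMap.adjoint_inner_left]
  have hf : ∀ x, adjoint (WithLp.fstL 2 ℂ X X) x = WithLp.toLp 2 (x, 0) := fun x => by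
    refine ext_inner_left ℂ fun y => ?_
    rw [ContinuousLinearMap.adjoint_inner_right]
    simp [WithLp.prod_inner_apply]
  have hg : ∀ x, adjoint (WithLp.sndL 2 ℂ X X) x = WithLp.toLp 2 (0, x) := fun x => by
    refine ext_inner_left ℂ fun y => ?_
    rw [ContinuousLinearMap.adjoint_inner_right]
    simp [WithLp.prod_inner_apply]
  have hE2 : ∀ x, E (E x) = E x := fun x => congrArg (fun f => f x) hEE
  refine ⟨adjoint (X.subtypeL ∘L WithLp.fstL 2 ℂ X X), adjoint (X.subtypeL ∘L WithLp.sndL 2 ℂ X X),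
    ?_, ?_, ?_, ?_, ?_, ?_, ?_, ?_, ?_⟩ <;>
  refine ContinuousLinearMap.ext fun x => ?_ <;>
  simp [hi, hf, hg, hE2, hmem, ← WithLp.toLp_add]
  rfl

/-- Finiteness passes to the range of a partial isometry whose compression maps `N` into `M`. -/
theorem FiniteProj.of_compression {M : Set (H →L[ℂ] H)} {N : StarSubalgebra ℂ (K →L[ℂ] K)}
    {E : H →L[ℂ] H} {w : H →L[ℂ] K} (hfin : FiniteProj M E) (hwE : w ∘L E = w)
    (hww : adjoint w ∘L w = E) (hEw : E ∘L adjoint w = adjoint w)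
    (hmap : ∀ y ∈ N, adjoint w ∘L y ∘L w ∈ M) :
    FiniteProj (N : Set (K →L[ℂ] K)) (w ∘L adjoint w) := by
  rintro f hf ⟨hff, hfs⟩ ⟨hfp, hpf⟩ ⟨v, hv, hvf, hvp⟩
  set p := w ∘L adjoint w with hp
  have hpp : IsProjOp p := by
    constructor
    · rw [hp, ContinuousLinearMap.mul_def, ContinuousLinearMap.comp_assoc,
        comp_comp_of_comp_eq hww, hEw]
    · rw [hp, ContinuousLinearMap.star_eq_adjoint, ContinuousLinearMap.adjoint_comp,
        ContinuousLinearMap.adjoint_adjoint]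
  have hsvp : star v * p = star v :=
    mul_eq_of_star_mul_self_eq hpp (by rw [star_star, hvp])
  have hvfv : v * f = v := mul_eq_of_star_mul_self_eq ⟨hff, hfs⟩ hvf
  have hvpv : v * p = v := by rw [← hvfv, mul_assoc, hfp]
  have hcomp : ∀ a b : K →L[ℂ] K, a * p = a →
      (adjoint w ∘L a ∘L w) * (adjoint w ∘L b ∘L w) = adjoint w ∘L (a * b) ∘L w := by
    intro a b ha
    conv_rhs => rw [← ha]
    rfl
  have hstar : ∀ a : K →L[ℂ] K, star (adjoint w ∘L a ∘L w) = adjoint w ∘L star a ∘L w := by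
    intro a
    simp only [ContinuousLinearMap.star_eq_adjoint, ContinuousLinearMap.adjoint_comp,
      ContinuousLinearMap.adjoint_adjoint, ContinuousLinearMap.comp_assoc]
  have hpE : adjoint w ∘L p ∘L w = E := by
    rw [hp, ContinuousLinearMap.comp_assoc, hww, hwE, hww]
  have hfE : adjoint w ∘L f ∘L w = E := by
    refine hfin _ (hmap f hf) ⟨by rw [hcomp f f hfp, hff], by rw [hstar, hfs]⟩
      ⟨by rw [← hpE, hcomp f p hfp, hfp], by rw [← hpE, hcomp p f hpp.1, hpf]⟩
      ⟨adjoint w ∘L v ∘L w, hmap v hv, ?_, ?_⟩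
    · rw [hstar, hcomp _ _ hsvp, hvf]
    · rw [hstar, hcomp _ _ hvpv, hvp, hpE]
  have : p * f * p = p := by
    have e := congrArg (fun x => w ∘L x ∘L adjoint w) hfE
    simp only [hEw] at e
    exact e
  rw [← this, hpf, hfp]

/-- The operators on the doubled space whose commutant consists of the matrices with even diagonal
and odd off-diagonal entries. -/
def gradedGenerators (R : VonNeumannAlgebra H) (Γ E : H →L[ℂ] H) (w₁ w₂ : H →L[ℂ] K) :
    Set (K →L[ℂ] K) :=
  {s | ∃ a ∈ R.commutant, s = block w₁ w₂ (a * E) 0 0 (a * E)} ∪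
    {block w₁ w₂ (Γ * E) 0 0 (-(Γ * E))}

theorem VonNeumannAlgebra.mem_of_forall_commutant (R : VonNeumannAlgebra H) {x : H →L[ℂ] H}
    (hx : ∀ a ∈ R.commutant, a * x = x * a) : x ∈ R := by
  rw [← R.commutant_commutant, VonNeumannAlgebra.mem_commutant_iff]
  exact hx

theorem compression_comm {w : H →L[ℂ] K} {y s : K →L[ℂ] K} {x : H →L[ℂ] H} (hys : s * y = y * s)
    (hsw : s ∘L w = w ∘L x) (hws : adjoint w ∘L s = x ∘L adjoint w) :
    x * (adjoint w ∘L y ∘L w) = (adjoint w ∘L y ∘L w) * x := by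
  rw [ContinuousLinearMap.mul_def, ContinuousLinearMap.mul_def] at *
  rw [← ContinuousLinearMap.comp_assoc, ← hws, ContinuousLinearMap.comp_assoc,
    comp_comp_of_comp_eq hys, ContinuousLinearMap.comp_assoc, ContinuousLinearMap.comp_assoc,
    ContinuousLinearMap.comp_assoc, hsw]

theorem mul_mul_eq_self_iff {M : Type*} [Monoid M] {Γ x : M} (hΓ : Γ * Γ = 1) : Γ * x * Γ = x ↔ Γ * x = x * Γ := by
  constructor
  · intro h
    conv_rhs => rw [← h, mul_assoc, hΓ, mul_one]
  · intro h
    rw [h, mul_assoc, hΓ, mul_one]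

theorem compression_mem_evenPart {R : VonNeumannAlgebra H} {Γ E : H →L[ℂ] H} {w₁ w₂ : H →L[ℂ] K}
    (hΓ : IsSAU Γ) (hE : E ∈ evenPart (R : Set (H →L[ℂ] H)) Γ) (hEp : IsProjOp E)
    (h : IsDoubling E w₁ w₂) {y : K →L[ℂ] K}
    (hy : y ∈ StarSubalgebra.centralizer ℂ (gradedGenerators R Γ E w₁ w₂)) :
    adjoint w₁ ∘L y ∘L w₁ ∈ evenPart (R : Set (H →L[ℂ] H)) Γ ∧
      adjoint w₂ ∘L y ∘L w₂ ∈ evenPart (R : Set (H →L[ℂ] H)) Γ := by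
  have hΓE : Γ * E = E * Γ := (mul_mul_eq_self_iff hΓ.2).1 hE.2
  have haE : ∀ a ∈ R.commutant, a * E = E * a := fun a ha =>
    ((VonNeumannAlgebra.mem_commutant_iff.1 ha) E hE.1).symm
  have hcompr : ∀ (w : H →L[ℂ] K) (a : H →L[ℂ] H) (s : K →L[ℂ] K), w ∘L E = w →
      E ∘L adjoint w = adjoint w → a * E = E * a → s * y = y * s → s ∘L w = w ∘L (a * E) →
      star s ∘L w = w ∘L star (a * E) →
      a * (adjoint w ∘L y ∘L w) = (adjoint w ∘L y ∘L w) * a := by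
    intro w a s hwE hEw ha hs h1 h2
    have h3 : adjoint w ∘L s = (a * E) ∘L adjoint w := by
      have := congrArg adjoint h2
      simpa only [ContinuousLinearMap.adjoint_comp, ContinuousLinearMap.star_eq_adjoint,
        ContinuousLinearMap.adjoint_adjoint] using this
    have := compression_comm hs h1 h3
    have e1 : E * (adjoint w ∘L y ∘L w) = adjoint w ∘L y ∘L w := by
      rw [ContinuousLinearMap.mul_def, comp_comp_of_comp_eq hEw]
    have e2 : (adjoint w ∘L y ∘L w) * E = adjoint w ∘L y ∘L w := by
      rw [ContinuousLinearMap.mul_def, ContinuousLinearMap.comp_assoc,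
        ContinuousLinearMap.comp_assoc, hwE]
    rwa [mul_assoc, e1, ha, ← mul_assoc, e2] at this
  have hmem := StarSubalgebra.mem_centralizer_iff ℂ |>.1 hy
  have hstarE : ∀ a : H →L[ℂ] H, a * E = E * a → star (a * E) * E = star (a * E) := by
    intro a ha
    rw [ha, star_mul, hEp.2, mul_assoc, hEp.1]
  have hER : ∀ a : H →L[ℂ] H, a * E * E = a * E := fun a => by rw [mul_assoc, hEp.1]
  have hdiag : ∀ a b : H →L[ℂ] H, a * E = E * a → b * E = E * b →
      block w₁ w₂ (a * E) 0 0 (b * E) ∈ gradedGenerators R Γ E w₁ w₂ →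
      a * (adjoint w₁ ∘L y ∘L w₁) = (adjoint w₁ ∘L y ∘L w₁) * a ∧
      b * (adjoint w₂ ∘L y ∘L w₂) = (adjoint w₂ ∘L y ∘L w₂) * b := by
    intro a b ha hb hs
    refine ⟨hcompr w₁ a _ h.fst_comp h.comp_adjoint_fst ha (hmem _ hs).1 ?_ ?_,
      hcompr w₂ b _ h.snd_comp h.comp_adjoint_snd hb (hmem _ hs).1 ?_ ?_⟩
    · rw [h.block_comp_fst (hER a) (zero_mul E), ContinuousLinearMap.comp_zero, add_zero]
    · rw [star_block, star_zero, h.block_comp_fst (hstarE a ha) (zero_mul E),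
        ContinuousLinearMap.comp_zero, add_zero]
    · rw [h.block_comp_snd (zero_mul E) (hER b), ContinuousLinearMap.comp_zero, zero_add]
    · rw [star_block, star_zero, h.block_comp_snd (zero_mul E) (hstarE b hb),
        ContinuousLinearMap.comp_zero, zero_add]
  have hR := fun a ha => hdiag a a (haE a ha) (haE a ha) (Or.inl ⟨a, ha, rfl⟩)
  have hΓ' := hdiag Γ (-Γ) hΓE (by rw [neg_mul, mul_neg, hΓE]) (Or.inr (by rw [neg_mul]; rfl))
  refine ⟨⟨R.mem_of_forall_commutant fun a ha => (hR a ha).1, (mul_mul_eq_self_iff hΓ.2).2 hΓ'.1⟩,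
    ⟨R.mem_of_forall_commutant fun a ha => (hR a ha).2, (mul_mul_eq_self_iff hΓ.2).2 ?_⟩⟩
  rw [← neg_inj, ← neg_mul, hΓ'.2, mul_neg]

theorem block_mem_centralizer {R : VonNeumannAlgebra H} {Γ E : H →L[ℂ] H} {w₁ w₂ : H →L[ℂ] K}
    (hΓ : IsSAU Γ) (hE : E ∈ evenPart (R : Set (H →L[ℂ] H)) Γ) (hEp : IsProjOp E)
    (h : IsDoubling E w₁ w₂) {x y z t : H →L[ℂ] H} (hx : x ∈ R) (hy : y ∈ R) (hz : z ∈ R)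
    (ht : t ∈ R) (hxE : E * x = x ∧ x * E = x) (hyE : E * y = y ∧ y * E = y)
    (hzE : E * z = z ∧ z * E = z) (htE : E * t = t ∧ t * E = t) (hΓx : Γ * x = x * Γ)
    (hΓy : Γ * y = -(y * Γ)) (hΓz : Γ * z = -(z * Γ)) (hΓt : Γ * t = t * Γ) :
    block w₁ w₂ x y z t ∈ StarSubalgebra.centralizer ℂ (gradedGenerators R Γ E w₁ w₂) := by
  have hΓE : Γ * E = E * Γ := (mul_mul_eq_self_iff hΓ.2).1 hE.2
  have haE : ∀ a ∈ R.commutant, a * E = E * a := fun a ha =>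
    ((VonNeumannAlgebra.mem_commutant_iff.1 ha) E hE.1).symm
  have hEaE : ∀ a : H →L[ℂ] H, a * E = E * a → E * (a * E) = a * E := fun a ha => by
    rw [ha, ← mul_assoc, hEp.1]
  have hcomm : ∀ s ∈ gradedGenerators R Γ E w₁ w₂,
      s * block w₁ w₂ x y z t = block w₁ w₂ x y z t * s := by
    rintro _ (⟨a, ha, rfl⟩ | rfl)
    · have hac := VonNeumannAlgebra.mem_commutant_iff.1 ha
      have e := hEaE a (haE a ha)
      have hl : ∀ q ∈ R, E * q = q ∧ q * E = q → a * E * q = q * (a * E) := fun q hq hqE => by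
        rw [mul_assoc, hqE.1, haE a ha, ← mul_assoc, hqE.2, hac q hq]
      rw [h.block_mul hxE.1 hyE.1 hzE.1 htE.1, h.block_mul e (mul_zero E) (mul_zero E) e]
      simp only [zero_mul, mul_zero, add_zero, zero_add, hl x hx hxE, hl y hy hyE, hl z hz hzE,
        hl t ht htE]
    · have e := hEaE Γ hΓE
      have hl : ∀ q, E * q = q ∧ q * E = q → Γ * E * q = Γ * q ∧ q * (Γ * E) = q * Γ :=
        fun q hqE => by
        rw [mul_assoc, hqE.1, hΓE, ← mul_assoc, hqE.2]; exact ⟨rfl, rfl⟩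
      rw [h.block_mul hxE.1 hyE.1 hzE.1 htE.1,
        h.block_mul e (mul_zero E) (mul_zero E) (by rw [mul_neg, e])]
      simp only [zero_mul, mul_zero, add_zero, zero_add, neg_mul, mul_neg, hl x hxE, hl y hyE,
        hl z hzE, hl t htE, hΓx, hΓy, hΓz, hΓt, neg_neg]
  have hstar : ∀ s ∈ gradedGenerators R Γ E w₁ w₂, star s ∈ gradedGenerators R Γ E w₁ w₂ := by
    rintro _ (⟨a, ha, rfl⟩ | rfl)
    · refine Or.inl ⟨star a, star_mem ha, ?_⟩
      rw [star_block, star_zero, star_mul, hEp.2, haE _ (star_mem ha)]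
    · refine Or.inr ?_
      rw [star_block, star_zero, star_neg, star_mul, hEp.2, hΓ.1, ← hΓE]
      rfl
  exact StarSubalgebra.mem_centralizer_iff ℂ |>.2 fun s hs => ⟨hcomm s hs, hcomm _ (hstar s hs)⟩

theorem half_add_mul_half_add {A : Type*} [Ring A] [Algebra ℂ A] (p p' q q' : A) :
    ((2⁻¹ : ℂ) • (p + p')) * ((2⁻¹ : ℂ) • (q + q')) +
      ((2⁻¹ : ℂ) • (p - p')) * ((2⁻¹ : ℂ) • (q - q')) = (2⁻¹ : ℂ) • (p * q + p' * q') ∧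
    ((2⁻¹ : ℂ) • (p + p')) * ((2⁻¹ : ℂ) • (q - q')) +
      ((2⁻¹ : ℂ) • (p - p')) * ((2⁻¹ : ℂ) • (q + q')) = (2⁻¹ : ℂ) • (p * q - p' * q') := by
  simp only [smul_mul_smul_comm, add_mul, mul_add, sub_mul, mul_sub]
  constructor <;> module

/-- Finiteness relative to the even part implies finiteness, given a doubling of the projection. -/
theorem finiteProj_of_isDoubling {R : VonNeumannAlgebra H} {Γ E : H →L[ℂ] H} {w₁ w₂ : H →L[ℂ] K}
    (hΓ : IsSAU Γ) (hinv : ∀ x ∈ R, Γ * x * Γ ∈ R)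
    (hE : E ∈ evenPart (R : Set (H →L[ℂ] H)) Γ) (hEp : IsProjOp E)
    (hfin : FiniteProj (evenPart (R : Set (H →L[ℂ] H)) Γ) E) (h : IsDoubling E w₁ w₂) :
    FiniteProj (R : Set (H →L[ℂ] H)) E := by
  have hΓE : Γ * E = E * Γ := (mul_mul_eq_self_iff hΓ.2).1 hE.2
  rintro f hf hfp ⟨hfE, -⟩ ⟨v, hv, hvf, hvE⟩
  have hvE' : star v * E = star v := mul_eq_of_star_mul_self_eq hEp (by rw [star_star, hvE])
  have hEv' : E * star v = star v := by
    have : v * E = v := by rw [← mul_eq_of_star_mul_self_eq hfp hvf, mul_assoc, hfE]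
    simpa [hEp.2] using congrArg star this
  rw [← hvf, ← star_star v]
  rw [← star_star v] at hvE
  have hp : star v ∈ R := star_mem hv
  generalize star v = p at *
  rw [star_star] at hvE
  set p' := Γ * p * Γ with hp'
  have hp'R : p' ∈ R := hinv p hp
  have hEp' : E * p' = p' := by
    rw [hp', ← mul_assoc, ← mul_assoc, ← hΓE, mul_assoc Γ, hEv']
  have hpE' : p' * E = p' := by rw [hp', mul_assoc, hΓE, ← mul_assoc, mul_assoc Γ, hvE']
  have hpp' : star p' * p' = E := by
    rw [hp', star_mul, star_mul, hΓ.1, mul_assoc, mul_assoc, mul_assoc Γ p,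
      mul_mul_of_mul_eq hΓ.2, one_mul, mul_mul_of_mul_eq hvE, ← mul_assoc, hE.2]
  have hΓp : Γ * p = p' * Γ := by rw [hp', mul_assoc, hΓ.2, mul_one]
  have hΓp' : Γ * p' = p * Γ := by rw [hp', ← mul_assoc, ← mul_assoc, hΓ.2, one_mul]
  set α := (2⁻¹ : ℂ) • (p + p') with hα
  set β := (2⁻¹ : ℂ) • (p - p') with hβ
  have hαR : α ∈ R := R.toStarSubalgebra.smul_mem (add_mem hp hp'R) _
  have hβR : β ∈ R := R.toStarSubalgebra.smul_mem (sub_mem hp hp'R) _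
  have hαE : E * α = α ∧ α * E = α := by
    simp only [hα, mul_smul_comm, smul_mul_assoc, mul_add, add_mul, hEv', hEp', hvE', hpE',
      and_self]
  have hβE : E * β = β ∧ β * E = β := by
    simp only [hβ, mul_smul_comm, smul_mul_assoc, mul_sub, sub_mul, hEv', hEp', hvE', hpE',
      and_self]
  have hΓα : Γ * α = α * Γ := by
    simp only [hα, mul_smul_comm, smul_mul_assoc, mul_add, add_mul, hΓp, hΓp', add_comm]
  have hΓβ : Γ * β = -(β * Γ) := by
    simp only [hβ, mul_smul_comm, smul_mul_assoc, mul_sub, sub_mul, hΓp, hΓp', ← smul_neg, neg_sub]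
  have hVN := block_mem_centralizer hΓ hE hEp h hαR hβR hβR hαR hαE hβE hβE hαE hΓα hΓβ hΓβ hΓα
  have hsα : star α = (2⁻¹ : ℂ) • (star p + star p') := by simp [hα]
  have hsβ : star β = (2⁻¹ : ℂ) • (star p - star p') := by simp [hβ]
  have hEs : ∀ {x : H →L[ℂ] H}, x * E = x → E * star x = star x := fun hx => by
    simpa [hEp.2] using congrArg star hx
  have hVV : star (block w₁ w₂ α β β α) * block w₁ w₂ α β β α = 1 := by
    obtain ⟨e, o⟩ := half_add_mul_half_add (star p) (star p') p p'
    rw [← hα, ← hβ, ← hsα, ← hsβ, hvE, hpp'] at e o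
    rw [star_block, h.block_mul hαE.1 hβE.1 hβE.1 hαE.1, e, o, add_comm (star β * α), o,
      add_comm (star β * β), e, sub_self, smul_zero, ← two_smul ℂ E, smul_smul,
      inv_mul_cancel₀ two_ne_zero, one_smul, h.block_one]
  have hsnd : 1 - w₁ ∘L adjoint w₁ = w₂ ∘L adjoint w₂ := by
    rw [← h.add_eq_one, add_sub_cancel_left]
  have hfst := h.block_fst ▸ block_mem_centralizer hΓ hE hEp h hE.1 (zero_mem R) (zero_mem R)
    (zero_mem R) ⟨hEp.1, hEp.1⟩ (by simp) (by simp) (by simp) hΓE (by simp) (by simp) (by simp)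
  have hVV' := mul_star_eq_one_of_finiteProj _ hfst ?_
    (hfin.of_compression h.fst_comp h.adjoint_fst_comp_fst h.comp_adjoint_fst fun y hy =>
      (compression_mem_evenPart hΓ hE hEp h hy).1)
    (hsnd ▸ hfin.of_compression h.snd_comp h.adjoint_snd_comp_snd h.comp_adjoint_snd fun y hy =>
      (compression_mem_evenPart hΓ hE hEp h hy).2) hVN hVV
  · obtain ⟨e, o⟩ := half_add_mul_half_add p p' (star p) (star p')
    rw [← hα, ← hβ, ← hsα, ← hsβ] at e o
    rw [star_block, h.block_mul (hEs hαE.2) (hEs hβE.2) (hEs hβE.2) (hEs hαE.2), e, o,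
      ← h.block_one] at hVV'
    have hcorner : ∀ q : H →L[ℂ] H, E * q = q → E * (q * star q) * E = q * star q := by
      intro q hq
      have : star q * E = star q := by simpa [hEp.2] using congrArg star hq
      rw [← mul_assoc, hq, mul_assoc, this]
    obtain ⟨k₁, k₂⟩ := h.eq_of_block_eq (by
      simp only [mul_smul_comm, smul_mul_assoc, mul_add, add_mul, hcorner _ hEv',
        hcorner _ hEp']) (by rw [hEp.1, hEp.1]) (by
      simp only [mul_smul_comm, smul_mul_assoc, mul_sub, sub_mul, hcorner _ hEv',
        hcorner _ hEp']) (by simp) hVV'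
    have : p * star p = (2⁻¹ : ℂ) • (p * star p + p' * star p') +
      (2⁻¹ : ℂ) • (p * star p - p' * star p') := by module
    rw [star_star, this, k₁, k₂, add_zero]
  · constructor
    · rw [ContinuousLinearMap.mul_def, ContinuousLinearMap.comp_assoc,
        comp_comp_of_comp_eq h.adjoint_fst_comp_fst, h.comp_adjoint_fst]
    · rw [ContinuousLinearMap.star_eq_adjoint, ContinuousLinearMap.adjoint_comp,
        ContinuousLinearMap.adjoint_adjoint]

end Operators

/-- in a graded von Neumann algebra with an odd unitary, a projection
in `R⁰` finite relative to `R⁰` is finite relative to `R`. -/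
theorem stmt_8 (R : VonNeumannAlgebra H) (Γ : H →L[ℂ] H) (hΓ : IsSAU Γ)
    (hinv : ∀ x ∈ R, Γ * x * Γ ∈ R) (U : H →L[ℂ] H)
    (hU : U ∈ oddPart (R : Set (H →L[ℂ] H)) Γ)
    (hUun : star U * U = 1 ∧ U * star U = 1)
    (E : H →L[ℂ] H) (hE : E ∈ evenPart (R : Set (H →L[ℂ] H)) Γ) (hEp : IsProjOp E)
    (hfin : FiniteProj (evenPart (R : Set (H →L[ℂ] H)) Γ) E) :
    FiniteProj (R : Set (H →L[ℂ] H)) E := by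
  have hmem : ∀ x : (1 - E).ker, E x = x := fun x =>
    (sub_eq_zero.1 (show (x : H) - E x = 0 from x.2)).symm
  have hEX : ∀ x, E x ∈ (1 - E).ker := fun x => by
    have : (1 - E) * E = 0 := by rw [sub_mul, one_mul, hEp.1, sub_self]
    exact congrArg (fun f => f x) this
  have : CompleteSpace (1 - E).ker := (1 - E).isClosed_ker.completeSpace_coe
  obtain ⟨w₁, w₂, h⟩ := exists_isDoubling hEp (1 - E).ker hmem hEX
  exact finiteProj_of_isDoubling hΓ hinv hE hEp hfin h
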